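/- For every positive integer k, ∑_{ν=1}^{k} ∑_{m,n≥1, m≡n (mod 3)} 1/(n^ν (m+n)^{k+2−ν}) = ζ(k+2)/3^{k+2} + (π/(3√3)) L(k+1; χ₃), where χ₃ is the nontrivial Dirichlet character modulo 3 and L(s;χ₃) = ∑_{n≥1} χ₃(n)/n^s. -/

import Mathlib

open scoped BigOperators Real

/-- The nontrivial (quadratic) Dirichlet character of conductor 3. -/
noncomputable def chi3 (n : ℕ) : ℂ :=
  if n % 3 = 1 then 1 else if n % 3 = 2 then -1 else 0

open Filter Topology

lemma hasSum_congr_terms {ι E : Type*} [AddCommMonoid E] [TopologicalSpace E]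
    {f g : ι → E} {a : E}
    (h : ∀ i, f i = g i) : HasSum f a ↔ HasSum g a := by
  rw [funext h]

lemma hasSum_telescope {u : ℕ → ℝ} (hu : Antitone u) (h0 : Tendsto u atTop (𝓝 0)) :
    HasSum (fun j => u j - u (j + 1)) (u 0) := by
  rw [hasSum_iff_tendsto_nat_of_nonneg fun j => sub_nonneg.2 (hu j.le_succ)]
  simp_rw [Finset.sum_range_sub']
  simpa using h0.const_sub (u 0)

lemma hasSum_sub_shift {u v : ℕ → ℝ} {C : ℝ} (hu : Antitone u) (h0 : Tendsto u atTop (𝓝 0))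
    (h : HasSum (fun j => v j - u j) C) (q : ℕ) :
    HasSum (fun j => v j - u (j + q)) (C + ∑ j ∈ Finset.range q, u j) := by
  induction q with
  | zero => simpa using h
  | succ q ih =>
    have ht : HasSum (fun j => u (j + q) - u (j + 1 + q)) (u (0 + q)) :=
      hasSum_telescope (u := fun j => u (j + q)) (fun a b hab => hu (by lia))
        (h0.comp (tendsto_add_atTop_nat q))
    rw [Finset.sum_range_succ, ← add_assoc]
    convert ih.add ht using 1
    · funext j
      rw [show j + 1 + q = j + (q + 1) by ring]
      ring
    · simp

lemma antitone_one_div_three_mul_add {c : ℝ} (hc : 0 < c) :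
    Antitone fun j : ℕ => 1 / (3 * (j : ℝ) + c) := by
  intro a b hab
  have : (a : ℝ) ≤ b := by exact_mod_cast hab
  dsimp only
  gcongr

lemma tendsto_one_div_three_mul_add (c : ℝ) :
    Tendsto (fun j : ℕ => 1 / (3 * (j : ℝ) + c)) atTop (𝓝 0) := by
  refine tendsto_const_nhds.div_atTop (tendsto_atTop_add_const_right _ _ ?_)
  exact tendsto_natCast_atTop_atTop.const_mul_atTop (by norm_num)

lemma one_third_mem_integerComplement : (1 / 3 : ℂ) ∈ Complex.integerComplement := by
  rintro ⟨n, hn⟩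
  have h : ((3 * n : ℤ) : ℂ) = (1 : ℤ) := by push_cast; rw [hn]; norm_num
  have := Int.cast_injective h
  lia

lemma pi_mul_cot_pi_mul_one_third :
    (π : ℂ) * Complex.cot (π * (1 / 3)) = ((π / √3 : ℝ) : ℂ) := by
  have h : (π : ℂ) * (1 / 3) = ((π / 3 : ℝ) : ℂ) := by push_cast; ring
  rw [h, Complex.cot, ← Complex.ofReal_cos, ← Complex.ofReal_sin, Real.cos_pi_div_three,
    Real.sin_pi_div_three, ← Complex.ofReal_div, ← Complex.ofReal_mul]
  congr 1
  field_simp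

lemma hasSum_quadratic_character_mod_three :
    HasSum (fun j : ℕ => 1 / (3 * (j : ℝ) + 1) - 1 / (3 * (j : ℝ) + 2)) (π / (3 * √3)) := by
  have hs : HasSum (fun n : ℕ => 1 / ((1 / 3 : ℂ) - (n + 1)) + 1 / ((1 / 3 : ℂ) + (n + 1)))
      (π * Complex.cot (π * (1 / 3)) - 1 / (1 / 3)) := by
    rw [cot_series_rep' one_third_mem_integerComplement]
    exact (summable_cotTerm one_third_mem_integerComplement).hasSum
  rw [pi_mul_cot_pi_mul_one_third] at hs
  have hr : HasSum (fun n : ℕ => 3 * (1 / (3 * (n : ℝ) + 4) - 1 / (3 * (n : ℝ) + 2)))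
      (π / √3 - 3) := by
    rw [← Complex.hasSum_ofReal]
    convert hs using 1
    · funext n
      have h1 : (3 * (n : ℂ) + 4) ≠ 0 := by exact_mod_cast (by positivity : (3 * (n : ℝ) + 4) ≠ 0)
      have h2 : (3 * (n : ℂ) + 2) ≠ 0 := by exact_mod_cast (by positivity : (3 * (n : ℝ) + 2) ≠ 0)
      have e1 : (1 / 3 : ℂ) - (n + 1) = -((3 * n + 2) / 3) := by ring
      have e2 : (1 / 3 : ℂ) + (n + 1) = (3 * n + 4) / 3 := by ring
      rw [e1, e2]
      push_cast
      field_simp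
      ring
    · push_cast
      norm_num
  have ht := hasSum_telescope (antitone_one_div_three_mul_add one_pos)
    (tendsto_one_div_three_mul_add 1)
  have hval : π / (3 * √3) = 1 / 3 * (π / √3 - 3) + 1 / (3 * ((0 : ℕ) : ℝ) + 1) := by
    simp
    field_simp
    ring
  rw [hval]
  refine (hasSum_congr_terms fun n => ?_).2 ((hr.mul_left (1 / 3)).add ht)
  push_cast
  ring

lemma sum_range_three_mul_ite_mod (f : ℕ → ℝ) {r : ℕ} (hr : r < 3) (q : ℕ) :
    ∑ i ∈ Finset.range (3 * q), (if i % 3 = r then f i else 0)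
      = ∑ j ∈ Finset.range q, f (3 * j + r) := by
  induction q with
  | zero => simp
  | succ q ih =>
    rw [mul_add, Finset.sum_range_succ _ q, ← ih]
    simp only [mul_one, Finset.sum_range_succ]
    have h0 : 3 * q % 3 = 0 := by lia
    have h1 : (3 * q + 1) % 3 = 1 := by lia
    have h2 : (3 * q + 2) % 3 = 2 := by lia
    rw [h0, h1, h2]
    interval_cases r <;> simp

lemma hasSum_ite_mod_three {f : ℕ → ℝ} {a : ℝ} {r : ℕ} (hr : r < 3)
    (h : HasSum (fun j => f (3 * j + r)) a) :
    HasSum (fun i => if i % 3 = r then f i else 0) a := by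
  have hinj : Function.Injective fun j : ℕ => 3 * j + r := fun a b hab => by
    dsimp only at hab
    lia
  rw [← hinj.hasSum_iff]
  · convert h using 2 with j
    simp only [Function.comp_apply]
    rw [if_pos (by lia)]
  · intro i hi
    rw [if_neg]
    exact fun hm => hi ⟨i / 3, by dsimp only; lia⟩

/-- The real-valued quadratic character modulo `3`. -/
noncomputable def realChi3 (n : ℕ) : ℝ :=
  if n % 3 = 1 then 1 else if n % 3 = 2 then -1 else 0

lemma hasSum_sub_over_residue_class (t : ℕ) :
    HasSum (fun i : ℕ => if (i + 1) % 3 = (t + 1) % 3 then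
        1 / ((i : ℝ) + 1) - 1 / ((i : ℝ) + 1 + ((t : ℝ) + 1)) else 0)
      (π / (3 * √3) * realChi3 (t + 1) + (if 3 ∣ t + 1 then 1 / ((t : ℝ) + 1) else 0)
        + ∑ i ∈ Finset.range t, if (i + t + 2) % 3 = 0 then 1 / ((i : ℝ) + 1) else 0) := by
  have hclass : ∀ i, (i + 1) % 3 = (t + 1) % 3 ↔ i % 3 = t % 3 := by lia
  simp only [hclass]
  apply hasSum_ite_mod_three (f := fun i : ℕ =>
    1 / ((i : ℝ) + 1) - 1 / ((i : ℝ) + 1 + ((t : ℝ) + 1))) (by lia)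
  obtain ⟨q, hq⟩ : ∃ q, t = 3 * q + t % 3 := ⟨t / 3, by lia⟩
  have hr : t % 3 < 3 := by lia
  generalize t % 3 = r at hq hr
  subst hq
  interval_cases r
  · have hχ : realChi3 (3 * q + 0 + 1) = 1 := by rw [realChi3, if_pos (by lia)]
    have hres : ∀ i, (i + (3 * q + 0) + 2) % 3 = 0 ↔ i % 3 = 1 := by lia
    simp only [hres, hχ]
    rw [if_neg (by lia), add_zero (3 * q),
      sum_range_three_mul_ite_mod (fun i : ℕ => 1 / ((i : ℝ) + 1)) (by norm_num) q]
    convert hasSum_sub_shift (antitone_one_div_three_mul_add two_pos)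
      (tendsto_one_div_three_mul_add 2) hasSum_quadratic_character_mod_three q using 1
    · funext j
      push_cast
      ring_nf
    · rw [mul_one, add_zero]
      congr 1
      refine Finset.sum_congr rfl fun j _ => ?_
      push_cast
      ring_nf
  · have hχ : realChi3 (3 * q + 1 + 1) = -1 := by
      rw [realChi3, if_neg (by lia), if_pos (by lia)]
    have hres : ∀ i, (i + (3 * q + 1) + 2) % 3 = 0 ↔ i % 3 = 0 := by lia
    simp only [hres, hχ]
    rw [if_neg (by lia), Finset.sum_range_succ, if_pos (by lia),
      sum_range_three_mul_ite_mod (fun i : ℕ => 1 / ((i : ℝ) + 1)) (by norm_num) q]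
    have h := hasSum_quadratic_character_mod_three.neg
    simp only [neg_sub] at h
    convert hasSum_sub_shift (antitone_one_div_three_mul_add one_pos)
      (tendsto_one_div_three_mul_add 1) h (q + 1) using 1
    · funext j
      push_cast
      ring_nf
    · rw [mul_neg, mul_one, add_zero, Finset.sum_range_succ]
      congr 2
      · refine Finset.sum_congr rfl fun j _ => ?_
        push_cast
        ring_nf
      · push_cast
        ring_nf
  · have hχ : realChi3 (3 * q + 2 + 1) = 0 := by
      rw [realChi3, if_neg (by lia), if_neg (by lia)]
    have hres : ∀ i, (i + (3 * q + 2) + 2) % 3 = 0 ↔ i % 3 = 2 := by lia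
    simp only [hres, hχ]
    rw [if_pos (by lia), Finset.sum_range_succ, Finset.sum_range_succ, if_neg (by lia),
      if_neg (by lia), sum_range_three_mul_ite_mod (fun i : ℕ => 1 / ((i : ℝ) + 1)) (by norm_num) q]
    have h : HasSum (fun j : ℕ => 1 / (3 * (j : ℝ) + 3) - 1 / (3 * (j : ℝ) + 3)) 0 := by
      simpa only [sub_self] using hasSum_zero
    convert hasSum_sub_shift (antitone_one_div_three_mul_add three_pos)
      (tendsto_one_div_three_mul_add 3) h (q + 1) using 1
    · funext j
      push_cast
      ring_nf
    · rw [mul_zero, zero_add, zero_add, add_zero, add_zero, Finset.sum_range_succ, add_comm]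
      congr 1
      · refine Finset.sum_congr rfl fun j _ => ?_
        push_cast
        ring_nf
      · push_cast
        ring_nf

lemma sum_Icc_one_div_pow_mul_pow {m n : ℝ} (hm : 0 < m) (hn : 0 < n) (k : ℕ) :
    ∑ ν ∈ Finset.Icc 1 k, 1 / (n ^ ν * (m + n) ^ (k + 2 - ν))
      = 1 / (m * (m + n) * n ^ k) - 1 / (m * (m + n) ^ (k + 1)) := by
  have hmn : 0 < m + n := by positivity
  induction k with
  | zero => simp
  | succ k ih =>
    rw [Finset.sum_Icc_succ_top (by lia)]
    have hstep : ∑ ν ∈ Finset.Icc 1 k, 1 / (n ^ ν * (m + n) ^ (k + 1 + 2 - ν))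
        = (∑ ν ∈ Finset.Icc 1 k, 1 / (n ^ ν * (m + n) ^ (k + 2 - ν))) * (1 / (m + n)) := by
      rw [Finset.sum_mul]
      refine Finset.sum_congr rfl fun ν hν => ?_
      have : k + 1 + 2 - ν = k + 2 - ν + 1 := by
        have := (Finset.mem_Icc.1 hν).2
        lia
      rw [this, pow_succ]
      field_simp
    rw [hstep, ih, show k + 1 + 2 - (k + 1) = 2 by lia]
    field_simp
    ring

lemma summable_one_div_mul_mul_add :
    Summable fun p : ℕ × ℕ =>
      1 / (((p.1 : ℝ) + 1) * ((p.2 : ℝ) + 1) * ((p.1 : ℝ) + 1 + ((p.2 : ℝ) + 1))) := by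
  have h : Summable fun i : ℕ => 1 / ((i : ℝ) + 1) ^ (3 / 2 : ℝ) := by
    have := (Real.summable_one_div_nat_add_rpow 1 (3 / 2)).2 (by norm_num)
    refine this.congr fun i => ?_
    rw [abs_of_pos (by positivity)]
  refine Summable.of_nonneg_of_le (fun p => by positivity) (fun p => ?_)
    (h.mul_of_nonneg h (fun i => by positivity) (fun i => by positivity))
  have hx : 0 < (p.1 : ℝ) + 1 := by positivity
  have hy : 0 < (p.2 : ℝ) + 1 := by positivity
  generalize (p.1 : ℝ) + 1 = x at hx
  generalize (p.2 : ℝ) + 1 = y at hy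
  have hpow : ∀ {z : ℝ}, 0 < z → z ^ (3 / 2 : ℝ) = z * √z := fun {z} hz => by
    rw [show (3 / 2 : ℝ) = 1 + 1 / 2 by norm_num, Real.rpow_add hz, Real.rpow_one,
      Real.sqrt_eq_rpow]
  rw [hpow hx, hpow hy, one_div_mul_one_div]
  have hs : √x * √y ≤ x + y := by
    nlinarith [Real.sq_sqrt hx.le, Real.sq_sqrt hy.le, sq_nonneg (√x - √y)]
  apply one_div_le_one_div_of_le (by positivity)
  calc x * √x * (y * √y) = x * y * (√x * √y) := by ring
    _ ≤ x * y * (x + y) := by gcongr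

lemma summable_ite_one_div {P : ℕ × ℕ → Prop} [DecidablePred P] {D : ℕ × ℕ → ℝ}
    (hD : ∀ p : ℕ × ℕ,
      ((p.1 : ℝ) + 1) * ((p.2 : ℝ) + 1) * ((p.1 : ℝ) + 1 + ((p.2 : ℝ) + 1)) ≤ D p) :
    Summable fun p => if P p then 1 / D p else 0 := by
  have hpos : ∀ p, 0 < D p := fun p => lt_of_lt_of_le (by positivity) (hD p)
  refine Summable.of_nonneg_of_le (fun p => ?_) (fun p => ?_) summable_one_div_mul_mul_add
  · have := hpos p
    split_ifs <;> positivity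
  · split_ifs
    · exact one_div_le_one_div_of_le (by positivity) (hD p)
    · positivity

lemma hasSum_triangle {f : ℕ → ℕ → ℝ} {a : ℝ}
    (h : HasSum (fun p : ℕ × ℕ => f p.1 (p.1 + p.2 + 1)) a) :
    HasSum (fun t => ∑ i ∈ Finset.range t, f i t) a := by
  let e : ℕ × ℕ → ℕ × ℕ := fun p => (p.1 + p.2 + 1, p.1)
  have hinj : Function.Injective e := fun p q hpq => by
    simp only [e, Prod.mk.injEq] at hpq
    exact Prod.ext (by lia) (by lia)
  have hg : HasSum (fun p : ℕ × ℕ => if p.2 < p.1 then f p.2 p.1 else 0) a := by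
    rw [← hinj.hasSum_iff]
    · refine (hasSum_congr_terms fun p => ?_).2 h
      simp only [Function.comp_apply, e]
      rw [if_pos (by lia)]
    · rintro ⟨t, i⟩ hp
      exact if_neg fun hlt => hp ⟨(i, t - i - 1), Prod.ext (by simp [e] at hlt ⊢; lia) rfl⟩
  refine hg.prod_fiberwise fun t => ?_
  have hs := hasSum_sum_of_ne_finset_zero (L := .unconditional ℕ)
    (f := fun i => if i < t then f i t else 0)
    (s := Finset.range t) (fun i hi => if_neg (by simpa using hi))
  rwa [Finset.sum_congr rfl fun i hi => if_pos (Finset.mem_range.1 hi)] at hs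

lemma hasSum_sum_residue_class (k : ℕ) (hk : 1 ≤ k) :
    HasSum (fun t : ℕ => (π / (3 * √3) * realChi3 (t + 1)
        + (if 3 ∣ t + 1 then 1 / ((t : ℝ) + 1) else 0)) / ((t : ℝ) + 1) ^ (k + 1))
      (∑ ν ∈ Finset.Icc 1 k, ∑' p : ℕ × ℕ,
        if (p.1 + 1) % 3 = (p.2 + 1) % 3 then
          1 / (((p.2 : ℝ) + 1) ^ ν * ((p.1 : ℝ) + 1 + ((p.2 : ℝ) + 1)) ^ (k + 2 - ν))
        else 0) := by
  have hterm : ∀ ν ∈ Finset.Icc 1 k, Summable fun p : ℕ × ℕ =>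
      if (p.1 + 1) % 3 = (p.2 + 1) % 3 then
        1 / (((p.2 : ℝ) + 1) ^ ν * ((p.1 : ℝ) + 1 + ((p.2 : ℝ) + 1)) ^ (k + 2 - ν)) else 0 := by
    intro ν hν
    obtain ⟨h1, h2⟩ := Finset.mem_Icc.1 hν
    refine summable_ite_one_div fun p => ?_
    have hx : 1 ≤ (p.1 : ℝ) + 1 := by simp
    have hy : 1 ≤ (p.2 : ℝ) + 1 := by simp
    generalize (p.1 : ℝ) + 1 = x at hx
    generalize (p.2 : ℝ) + 1 = y at hy
    calc x * y * (x + y) ≤ y * (x + y) ^ 2 := by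
          nlinarith [mul_pos (mul_pos (by linarith : 0 < y) (by linarith : 0 < y))
            (by linarith : 0 < x + y)]
      _ ≤ y ^ ν * (x + y) ^ (k + 2 - ν) := by
          gcongr
          · exact le_self_pow₀ hy (by lia)
          · linarith
          · lia
  have hA : Summable fun p : ℕ × ℕ => if (p.1 + 1) % 3 = (p.2 + 1) % 3 then
      1 / (((p.1 : ℝ) + 1) * ((p.1 : ℝ) + 1 + ((p.2 : ℝ) + 1)) * ((p.2 : ℝ) + 1) ^ k) else 0 := by
    refine summable_ite_one_div fun p => ?_
    have hy : (p.2 : ℝ) + 1 ≤ ((p.2 : ℝ) + 1) ^ k := le_self_pow₀ (by simp) (by lia)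
    rw [mul_right_comm]
    gcongr
  have hB : Summable fun p : ℕ × ℕ => if (p.1 + 1) % 3 = (p.2 + 1) % 3 then
      1 / (((p.1 : ℝ) + 1) * ((p.1 : ℝ) + 1 + ((p.2 : ℝ) + 1)) ^ (k + 1)) else 0 := by
    refine summable_ite_one_div fun p => ?_
    have hx : 1 ≤ (p.1 : ℝ) + 1 := by simp
    have hy : 1 ≤ (p.2 : ℝ) + 1 := by simp
    have hxy : (p.2 : ℝ) + 1 ≤ ((p.1 : ℝ) + 1 + ((p.2 : ℝ) + 1)) ^ k :=
      le_trans (by linarith) (le_self_pow₀ (by linarith) (by lia : k ≠ 0))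
    rw [pow_succ, ← mul_assoc]
    gcongr
  have hsplit := hasSum_sum fun ν hν => (hterm ν hν).hasSum
  have heq : ∀ p : ℕ × ℕ, (∑ ν ∈ Finset.Icc 1 k, if (p.1 + 1) % 3 = (p.2 + 1) % 3 then
      1 / (((p.2 : ℝ) + 1) ^ ν * ((p.1 : ℝ) + 1 + ((p.2 : ℝ) + 1)) ^ (k + 2 - ν)) else 0)
      = (if (p.1 + 1) % 3 = (p.2 + 1) % 3 then
      1 / (((p.1 : ℝ) + 1) * ((p.1 : ℝ) + 1 + ((p.2 : ℝ) + 1)) * ((p.2 : ℝ) + 1) ^ k) else 0)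
      - (if (p.1 + 1) % 3 = (p.2 + 1) % 3 then
      1 / (((p.1 : ℝ) + 1) * ((p.1 : ℝ) + 1 + ((p.2 : ℝ) + 1)) ^ (k + 1)) else 0) := by
    intro p
    split_ifs
    · exact sum_Icc_one_div_pow_mul_pow (by positivity) (by positivity) k
    · simp
  rw [hsplit.unique ((hasSum_congr_terms heq).2 (hA.hasSum.sub hB.hasSum))]
  have hfiber : ∀ t : ℕ, HasSum (fun i : ℕ => if (i + 1) % 3 = (t + 1) % 3 then
      1 / (((i : ℝ) + 1) * ((i : ℝ) + 1 + ((t : ℝ) + 1)) * ((t : ℝ) + 1) ^ k) else 0)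
      ((π / (3 * √3) * realChi3 (t + 1) + (if 3 ∣ t + 1 then 1 / ((t : ℝ) + 1) else 0)
        + ∑ i ∈ Finset.range t, if (i + t + 2) % 3 = 0 then 1 / ((i : ℝ) + 1) else 0)
        / ((t : ℝ) + 1) ^ (k + 1)) := by
    intro t
    refine (hasSum_congr_terms fun i => ?_).2
      ((hasSum_sub_over_residue_class t).div_const (((t : ℝ) + 1) ^ (k + 1)))
    split_ifs
    · field_simp
      ring
    · simp
  have hA' := HasSum.prod_fiberwise ((Equiv.prodComm ℕ ℕ).hasSum_iff.2 hA.hasSum) hfiber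
  have hB' := hasSum_triangle (f := fun i t => (if (i + t + 2) % 3 = 0 then
      1 / ((i : ℝ) + 1) else 0) / ((t : ℝ) + 1) ^ (k + 1)) ((hasSum_congr_terms fun p => by
    have hmod : (p.1 + (p.1 + p.2 + 1) + 2) % 3 = 0 ↔ (p.1 + 1) % 3 = (p.2 + 1) % 3 := by lia
    simp only [hmod]
    split_ifs
    · push_cast
      rw [div_div]
      ring_nf
    · simp).2 hB.hasSum)
  refine (hasSum_congr_terms fun t => ?_).2 (hA'.sub hB')
  rw [← Finset.sum_div]
  ring

lemma ofReal_realChi3 (n : ℕ) : ((realChi3 n : ℝ) : ℂ) = chi3 n := by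
  unfold realChi3 chi3
  split_ifs <;> simp

lemma summable_norm_one_div_nat_add_one_pow {p : ℕ} (hp : 1 < p) :
    Summable fun n : ℕ => ‖1 / ((n : ℂ) + 1) ^ p‖ := by
  refine ((summable_nat_add_iff 1).2 (Real.summable_one_div_nat_pow.2 hp)).congr fun n => ?_
  rw [norm_div, norm_pow, norm_one, ← Nat.cast_add_one, Complex.norm_natCast]

lemma hasSum_ite_three_dvd (k : ℕ) :
    HasSum (fun t : ℕ => (if 3 ∣ t + 1 then 1 / ((t : ℂ) + 1) else 0) / ((t : ℂ) + 1) ^ (k + 1))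
      (riemannZeta (k + 2) / 3 ^ (k + 2)) := by
  have hsum : Summable fun n : ℕ => 1 / ((n : ℂ) + 1) ^ (k + 2) :=
    (summable_norm_one_div_nat_add_one_pow (by lia)).of_norm
  have hζ : riemannZeta (k + 2) = ∑' n : ℕ, 1 / ((n : ℂ) + 1) ^ (k + 2) := by
    rw [zeta_eq_tsum_one_div_nat_add_one_cpow (by simp; linarith [k.cast_nonneg (α := ℝ)])]
    exact_mod_cast rfl
  rw [hζ]
  have hinj : Function.Injective fun n : ℕ => 3 * n + 2 := fun a b hab => by
    dsimp only at hab
    lia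
  rw [← hinj.hasSum_iff]
  · refine (hasSum_congr_terms fun n => ?_).2 (hsum.hasSum.div_const _)
    simp only [Function.comp_apply]
    rw [if_pos (by lia), div_div, ← pow_succ', div_div, ← mul_pow]
    push_cast
    ring_nf
  · intro t ht
    rw [if_neg, zero_div]
    exact fun hd => ht ⟨t / 3, by dsimp only; lia⟩

lemma summable_chi3_div_pow {k : ℕ} (hk : 1 ≤ k) :
    Summable fun n : ℕ => chi3 (n + 1) / ((n : ℂ) + 1) ^ (k + 1) := by
  refine .of_norm_bounded (summable_norm_one_div_nat_add_one_pow (p := k + 1) (by lia)) fun n => ?_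
  rw [norm_div, norm_div]
  gcongr
  unfold chi3
  split_ifs <;> simp

theorem partial_double_zeta_mod_three (k : ℕ) (hk : 1 ≤ k) :
    (∑ ν ∈ Finset.Icc 1 k, ∑' p : ℕ × ℕ,
        if (p.1 + 1) % 3 = (p.2 + 1) % 3 then
          1 / (((p.2 : ℂ) + 1) ^ ν * ((p.1 : ℂ) + 1 + ((p.2 : ℂ) + 1)) ^ (k + 2 - ν))
        else 0)
      = riemannZeta (k + 2) / 3 ^ (k + 2)
        + ((π : ℂ) / (3 * Real.sqrt 3)) * ∑' n : ℕ, chi3 (n + 1) / ((n : ℂ) + 1) ^ (k + 1) := by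
  have hL := Complex.hasSum_ofReal.2 (hasSum_sum_residue_class k hk)
  have hR := (hasSum_ite_three_dvd k).add
    ((summable_chi3_div_pow hk).hasSum.mul_left ((π : ℂ) / (3 * Real.sqrt 3)))
  have h := hL.unique ((hasSum_congr_terms fun t => by
    rw [← ofReal_realChi3]
    push_cast
    split_ifs <;> push_cast <;> ring).2 hR)
  rw [← h]
  push_cast
  refine Finset.sum_congr rfl fun ν _ => tsum_congr fun p => ?_
  split_ifs <;> push_cast <;> rfl
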